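/- Let M be a von Neumann algebra with a faithful normal semifinite trace τ and let α ∈ M^n (n ≥ 1) be a commuting self-adjoint n-tuple. Then the quasicentral modulus of α relative to the uniform norm vanishes: k_M(α) = 0. Explicitly, for every a ∈ F₁⁺(M) and every ε > 0 there exists r ∈ F₁⁺(M) with r ≥ a and ‖[r, α(j)]‖ ≤ ε for all 1 ≤ j ≤ n. -/

import Mathlib

open ContinuousLinearMap Filter Topology

noncomputable section

namespace VNA

variable {H : Type*} [NormedAddCommGroup H] [InnerProductSpace ℂ H] [CompleteSpace H]

/-- A projection (orthogonal projection): idempotent and self-adjoint. -/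
def IsProjection (p : H →L[ℂ] H) : Prop := p * p = p ∧ star p = p

/-- Murray–von Neumann equivalence of `p` and `q` relative to `M`. -/
def MvNE (M : VonNeumannAlgebra H) (p q : H →L[ℂ] H) : Prop :=
  ∃ v ∈ M, star v * v = p ∧ v * star v = q

/-- `p` is a finite projection of `M`; for projections, `q ≤ p` is the range
containment `p * q = q`. -/
def IsFiniteProjection (M : VonNeumannAlgebra H) (p : H →L[ℂ] H) : Prop :=
  p ∈ M ∧ IsProjection p ∧
    ∀ q, q ∈ M → IsProjection q → p * q = q → MvNE M q p → q = p

def IsInfiniteProjection (M : VonNeumannAlgebra H) (p : H →L[ℂ] H) : Prop :=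
  p ∈ M ∧ IsProjection p ∧ ¬ IsFiniteProjection M p

/-- The centre `Z(M) = M ∩ M'` as a set. -/
def centerSet (M : VonNeumannAlgebra H) : Set (H →L[ℂ] H) :=
  {z | z ∈ M ∧ ∀ y ∈ M, z * y = y * z}

def IsCentralProjection (M : VonNeumannAlgebra H) (z : H →L[ℂ] H) : Prop :=
  IsProjection z ∧ z ∈ centerSet M

def IsProperlyInfiniteProjection (M : VonNeumannAlgebra H) (p : H →L[ℂ] H) : Prop :=
  p ∈ M ∧ IsProjection p ∧
    ∀ z, IsCentralProjection M z → z * p ≠ 0 → IsInfiniteProjection M (z * p)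

def ProperlyInfinite (M : VonNeumannAlgebra H) : Prop :=
  IsProperlyInfiniteProjection M 1

/-- `M` is σ-finite: every family of pairwise orthogonal nonzero projections in `M`
is countable. -/
def SigmaFinite (M : VonNeumannAlgebra H) : Prop :=
  ∀ S : Set (H →L[ℂ] H), (∀ p ∈ S, p ∈ M ∧ IsProjection p ∧ p ≠ 0) →
    (∀ p ∈ S, ∀ q ∈ S, p ≠ q → p * q = 0) → S.Countable

/-- A faithful normal semifinite trace on `M`. -/
structure IsFNSTrace (M : VonNeumannAlgebra H) (τ : (H →L[ℂ] H) → ENNReal) : Prop where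
  map_zero : τ 0 = 0
  additive : ∀ x y : H →L[ℂ] H, x ∈ M → y ∈ M → 0 ≤ x → 0 ≤ y → τ (x + y) = τ x + τ y
  homogeneous : ∀ (c : ℝ) (x : H →L[ℂ] H), 0 ≤ c → x ∈ M → 0 ≤ x →
    τ (c • x) = ENNReal.ofReal c * τ x
  tracial : ∀ x : H →L[ℂ] H, x ∈ M → τ (star x * x) = τ (x * star x)
  faithful : ∀ x : H →L[ℂ] H, x ∈ M → 0 ≤ x → τ x = 0 → x = 0
  normal : ∀ (ι : Type*) [Preorder ι] [IsDirected ι (· ≤ ·)] [Nonempty ι]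
      (f : ι → (H →L[ℂ] H)) (x : H →L[ℂ] H),
      (∀ i, f i ∈ M) → (∀ i, 0 ≤ f i) → Monotone f → (∃ C : ℝ, ∀ i, ‖f i‖ ≤ C) →
      x ∈ M → IsLUB (Set.range f) x → τ x = ⨆ i, τ (f i)
  semifinite : ∀ x : H →L[ℂ] H, x ∈ M → 0 ≤ x → x ≠ 0 →
      ∃ y, y ∈ M ∧ 0 ≤ y ∧ y ≤ x ∧ y ≠ 0 ∧ τ y < ⊤

/-- `p` is a `τ`-finite projection of `M`. -/
def IsTauFiniteProjection (M : VonNeumannAlgebra H) (τ : (H →L[ℂ] H) → ENNReal)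
    (p : H →L[ℂ] H) : Prop :=
  p ∈ M ∧ IsProjection p ∧ τ p < ⊤

/-- `F₁⁺(M) = {x ∈ M : 0 ≤ x ≤ 1, px = x for some τ-finite projection p}`. -/
def F1plus (M : VonNeumannAlgebra H) (τ : (H →L[ℂ] H) → ENNReal) : Set (H →L[ℂ] H) :=
  {x | x ∈ M ∧ 0 ≤ x ∧ x ≤ 1 ∧ ∃ p, IsTauFiniteProjection M τ p ∧ p * x = x}

/-- `K(M,τ)`: operator-norm closure of the τ-finitely supported elements of `M`. -/
def Kideal (M : VonNeumannAlgebra H) (τ : (H →L[ℂ] H) → ENNReal) : Set (H →L[ℂ] H) :=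
  closure {x | x ∈ M ∧ ∃ p, IsTauFiniteProjection M τ p ∧ p * x = x}

/-- A commuting self-adjoint `n`-tuple in `M`. -/
def IsCommutingSelfAdjointTuple (M : VonNeumannAlgebra H) {n : ℕ}
    (α : Fin n → (H →L[ℂ] H)) : Prop :=
  (∀ j, α j ∈ M) ∧ (∀ j, star (α j) = α j) ∧ ∀ i j, α i * α j = α j * α i

/-- `‖[r,α]‖ = max_{1≤j≤n} ‖[r, α(j)]‖`. -/
def commNorm {n : ℕ} (α : Fin n → (H →L[ℂ] H)) (r : H →L[ℂ] H) : ℝ :=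
  ⨆ j, ‖r * α j - α j * r‖

/-- `WZ*(S)`: the double commutant in `B(H)` of `S ∪ Z(M)`. -/
def WZstar (M : VonNeumannAlgebra H) (S : Set (H →L[ℂ] H)) : Set (H →L[ℂ] H) :=
  Set.centralizer (Set.centralizer (S ∪ centerSet M))

/-- A diagonal operator of `M`: `d = Σ_k λ_k p_k` with pairwise orthogonal
projections `p_k ∈ M`, the series converging in the strong operator topology. -/
def IsDiagonal (M : VonNeumannAlgebra H) (d : H →L[ℂ] H) : Prop :=
  ∃ (p : ℕ → H →L[ℂ] H) (lam : ℕ → ℂ),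
    (∀ k, p k ∈ M) ∧ (∀ k, IsProjection (p k)) ∧
    (∀ k l, k ≠ l → p k * p l = 0) ∧
    ∀ ξ : H, HasSum (fun k => lam k • (p k ξ)) (d ξ)

end VNA

namespace VNA

section Aux

variable {H : Type*} [NormedAddCommGroup H] [InnerProductSpace ℂ H] [CompleteSpace H]

/-- Range projection. -/
def rp (x : H →L[ℂ] H) : H →L[ℂ] H :=
  (LinearMap.range (x : H →ₗ[ℂ] H)).topologicalClosure.starProjection

lemma rp_proj (x : H →L[ℂ] H) : IsProjection (rp x) :=
  ⟨Submodule.isIdempotentElem_starProjection _, isSelfAdjoint_starProjection _⟩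

lemma rp_mul_self (x : H →L[ℂ] H) : rp x * x = x := by
  ext v
  exact Submodule.starProjection_eq_self_iff.2
    (Submodule.le_topologicalClosure _ (LinearMap.mem_range_self (x : H →ₗ[ℂ] H) v))

lemma rp_mem (x : H →L[ℂ] H) (v : H) : rp x v ∈ closure (Set.range x) := by
  have h := Submodule.starProjection_apply_mem
    (LinearMap.range (x : H →ₗ[ℂ] H)).topologicalClosure v
  have h2 : ((LinearMap.range (x : H →ₗ[ℂ] H)).topologicalClosure : Set H)
      = closure (Set.range x) := by
    rw [Submodule.topologicalClosure_coe]; rfl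
  rw [← h2]; exact h

/-- operators equal on the range of `x` are equal on the range projection -/
lemma mul_rp_eq {x y z : H →L[ℂ] H} (h : y * x = z * x) : y * rp x = z * rp x := by
  ext v
  have hc : IsClosed {w : H | y w = z w} := isClosed_eq y.continuous z.continuous
  have hs : Set.range x ⊆ {w : H | y w = z w} := by
    rintro _ ⟨w, rfl⟩
    exact congrArg (fun f : H →L[ℂ] H => f w) h
  exact closure_minimal hs hc (rp_mem x v)

lemma rp_comm {x y : H →L[ℂ] H} (h : y * x = x * y) (h' : star y * x = x * star y) :
    rp x * y = y * rp x := by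
  have key : ∀ u : H →L[ℂ] H, u * x = x * u → u * rp x = rp x * u * rp x := by
    intro u hu
    apply mul_rp_eq
    rw [mul_assoc, hu, ← mul_assoc, rp_mul_self]
  have h1 := key y h
  have h2 := congrArg star (key (star y) h')
  simp only [star_mul, star_star, (rp_proj x).2] at h2
  rw [h2, ← mul_assoc]; exact h1.symm

lemma mem_of_comm (M : VonNeumannAlgebra H) {x : H →L[ℂ] H}
    (h : ∀ y, (∀ m ∈ M, m * y = y * m) → y * x = x * y) : x ∈ M := by
  have h0 := VonNeumannAlgebra.centralizer_centralizer M
  have : x ∈ Set.centralizer (Set.centralizer (M : Set (H →L[ℂ] H))) := by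
    intro y hy
    exact h y (fun m hm => hy m hm)
  rw [h0] at this
  exact this

lemma star_comm (M : VonNeumannAlgebra H) {y : H →L[ℂ] H}
    (h : ∀ m ∈ M, m * y = y * m) : ∀ m ∈ M, m * star y = star y * m := by
  intro m hm
  have := congrArg star (h (star m) (star_mem hm))
  simp only [star_mul, star_star] at this
  exact this.symm

lemma rp_mem_M (M : VonNeumannAlgebra H) {x : H →L[ℂ] H} (hx : x ∈ M) : rp x ∈ M :=
  mem_of_comm M fun y hy =>
    (rp_comm (hy x hx).symm (star_comm M hy x hx).symm).symm

lemma sqrt_mem_M (M : VonNeumannAlgebra H) {x : H →L[ℂ] H} (hx : x ∈ M) :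
    CFC.sqrt x ∈ M :=
  mem_of_comm M fun z hz => by
    have h : Commute x z := hz x hx
    rw [CFC.sqrt_eq_cfc]
    exact (h.cfc_nnreal _).eq.symm

lemma tau_mono {M : VonNeumannAlgebra H} {τ : (H →L[ℂ] H) → ENNReal}
    (hτ : IsFNSTrace M τ) {x y : H →L[ℂ] H} (hx : x ∈ M) (hy : y ∈ M) (h0 : 0 ≤ x)
    (h : x ≤ y) : τ x ≤ τ y := by
  have := hτ.additive x (y - x) hx (sub_mem hy hx) h0 (sub_nonneg.2 h)
  rw [add_sub_cancel] at this
  rw [this]; exact le_self_add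

lemma proj_nonneg {p : H →L[ℂ] H} (hp : IsProjection p) : 0 ≤ p := by
  have := star_mul_self_nonneg p
  rwa [hp.2, hp.1] at this

lemma proj_compl {p : H →L[ℂ] H} (hp : IsProjection p) : IsProjection (1 - p) := by
  refine ⟨?_, by simp [hp.2]⟩
  simp [mul_sub, sub_mul, hp.1]

/-- if `q a = a`, `0 ≤ a ≤ 1` then `a ≤ q` -/
lemma le_proj {q a : H →L[ℂ] H} (hq : IsProjection q) (h0 : 0 ≤ a) (h1 : a ≤ 1)
    (h : q * a = a) : a ≤ q := by
  have hs : star a = a := IsSelfAdjoint.of_nonneg h0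
  have h2 : a * q = a := by
    have := congrArg star h
    rwa [star_mul, hs, hq.2] at this
  have h3 := star_left_conjugate_le_conjugate h1 q
  rwa [hq.2, h, h2, mul_one, hq.1] at h3

lemma cfc_poly (T : H →L[ℂ] H) (hT : IsSelfAdjoint T) (n : ℕ) :
    cfc (fun t : ℝ => (1 - t) ^ n) T = (1 - T) ^ n := by
  rw [cfc_pow (fun t : ℝ => 1 - t) n T, cfc_sub (fun _ : ℝ => 1) (fun t => t) T,
    cfc_const_one ℝ T, cfc_id' ℝ T]

lemma cfc_poly2 (T : H →L[ℂ] H) (hT : IsSelfAdjoint T) (n : ℕ) :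
    cfc (fun t : ℝ => (1 - t) ^ n * t) T = (1 - T) ^ n * T := by
  rw [cfc_mul (fun t : ℝ => (1 - t) ^ n) (fun t => t) T, cfc_poly T hT, cfc_id' ℝ T]

lemma spec_mem {T : H →L[ℂ] H} (h0 : 0 ≤ T) (h1 : T ≤ 1) {t : ℝ} (ht : t ∈ spectrum ℝ T) :
    0 ≤ t ∧ t ≤ 1 := by
  refine ⟨spectrum_nonneg_of_nonneg h0 ht, ?_⟩
  have hs : IsSelfAdjoint T := IsSelfAdjoint.of_nonneg h0
  exact (le_algebraMap_iff_spectrum_le (r := (1:ℝ)) (a := T)).1 (by simpa using h1) t ht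

lemma pow_nonneg' {T : H →L[ℂ] H} (h0 : 0 ≤ T) (h1 : T ≤ 1) (n : ℕ) : 0 ≤ (1 - T) ^ n := by
  have hs : IsSelfAdjoint T := IsSelfAdjoint.of_nonneg h0
  rw [← cfc_poly T hs]
  exact cfc_nonneg fun t ht => pow_nonneg (sub_nonneg.2 (spec_mem h0 h1 ht).2) _

lemma pow_mul_nonneg' {T : H →L[ℂ] H} (h0 : 0 ≤ T) (h1 : T ≤ 1) (n : ℕ) :
    0 ≤ (1 - T) ^ n * T := by
  have hs : IsSelfAdjoint T := IsSelfAdjoint.of_nonneg h0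
  rw [← cfc_poly2 T hs]
  exact cfc_nonneg fun t ht =>
    mul_nonneg (pow_nonneg (sub_nonneg.2 (spec_mem h0 h1 ht).2) _) (spec_mem h0 h1 ht).1

lemma pow_norm {T : H →L[ℂ] H} (h0 : 0 ≤ T) (h1 : T ≤ 1) (n : ℕ) : ‖(1 - T) ^ n‖ ≤ 1 := by
  have hs : IsSelfAdjoint T := IsSelfAdjoint.of_nonneg h0
  rw [← cfc_poly T hs]
  refine norm_cfc_le zero_le_one fun t ht => ?_
  obtain ⟨ha, hb⟩ := spec_mem h0 h1 ht
  rw [Real.norm_of_nonneg (pow_nonneg (sub_nonneg.2 hb) _)]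
  exact pow_le_one₀ (by linarith) (by linarith)

lemma pow_mul_norm {T : H →L[ℂ] H} (h0 : 0 ≤ T) (h1 : T ≤ 1) (n : ℕ) :
    ‖(1 - T) ^ n * T‖ ≤ 1 / ((n : ℝ) + 1) := by
  have hs : IsSelfAdjoint T := IsSelfAdjoint.of_nonneg h0
  rw [← cfc_poly2 T hs]
  refine norm_cfc_le (by positivity) fun t ht => ?_
  obtain ⟨ha, hb⟩ := spec_mem h0 h1 ht
  have hb' : 0 ≤ 1 - t := by linarith
  rw [Real.norm_of_nonneg (by positivity), le_div_iff₀ (by positivity)]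
  have e1 : 1 + (n : ℝ) * t ≤ (1 + t) ^ n := one_add_mul_le_pow (by linarith) n
  have e2 : (1 - t) ^ n * (1 + t) ^ n ≤ 1 := by
    rw [← mul_pow]
    exact pow_le_one₀ (by nlinarith) (by nlinarith)
  have e3 : 0 ≤ (1 - t) ^ n := by positivity
  nlinarith [mul_le_mul_of_nonneg_left e1 e3, mul_le_mul_of_nonneg_left hb e3]

lemma pow_tendsto {T : H →L[ℂ] H} (h0 : 0 ≤ T) (h1 : T ≤ 1) (v : H)
    (hv : v ∈ closure (Set.range T)) :
    Tendsto (fun n : ℕ => ((1 - T) ^ n) v) atTop (𝓝 0) := by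
  rw [Metric.tendsto_atTop]
  intro ε hε
  obtain ⟨_, ⟨w, rfl⟩, hw⟩ := Metric.mem_closure_iff.1 hv (ε / 2) (by positivity)
  obtain ⟨N, hN⟩ := exists_nat_gt (‖w‖ / (ε / 2))
  refine ⟨N, fun n hn => ?_⟩
  rw [dist_zero_right]
  have e1 : ((1 - T) ^ n) v = ((1 - T) ^ n) (v - T w) + ((1 - T) ^ n * T) w := by
    rw [map_sub]; simp
  have e2 : ‖((1 - T) ^ n) (v - T w)‖ < ε / 2 := by
    refine lt_of_le_of_lt (ContinuousLinearMap.le_of_opNorm_le _ (pow_norm h0 h1 n) _) ?_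
    rw [one_mul, ← dist_eq_norm]; exact hw
  have e3 : ‖((1 - T) ^ n * T) w‖ ≤ ε / 2 := by
    refine (ContinuousLinearMap.le_of_opNorm_le _ (pow_mul_norm h0 h1 n) _).trans ?_
    have hn' : (N : ℝ) ≤ n := by exact_mod_cast hn
    rw [div_lt_iff₀ (by positivity)] at hN
    rw [div_mul_eq_mul_div, one_mul, div_le_iff₀ (by positivity)]
    nlinarith
  rw [e1]
  exact (norm_add_le _ _).trans_lt (by linarith)

lemma isLUB_rp {T : H →L[ℂ] H} (h0 : 0 ≤ T) (h1 : T ≤ 1) :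
    IsLUB (Set.range fun i : ULift ℕ => 1 - (1 - T) ^ i.down) (rp T) := by
  have hQ := rp_proj T
  have hF1 : ∀ n : ℕ, rp T * (1 - (1 - T) ^ n) = 1 - (1 - T) ^ n := by
    intro n
    induction n with
    | zero => simp
    | succ n ih =>
      have : (1 : H →L[ℂ] H) - (1 - T) ^ (n + 1)
          = (1 - (1 - T) ^ n) + T * (1 - T) ^ n := by
        rw [pow_succ', sub_mul]; noncomm_ring
      rw [this, mul_add, ih, ← mul_assoc, rp_mul_self]
  have hF0 : ∀ n : ℕ, 0 ≤ 1 - (1 - T) ^ n := by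
    intro n
    induction n with
    | zero => simp
    | succ n ih =>
      have : (1 : H →L[ℂ] H) - (1 - T) ^ (n + 1)
          = (1 - (1 - T) ^ n) + (1 - T) ^ n * T := by
        rw [pow_succ, mul_sub]; noncomm_ring
      rw [this]; exact add_nonneg ih (pow_mul_nonneg' h0 h1 n)
  constructor
  · rintro _ ⟨i, rfl⟩
    exact le_proj hQ (hF0 _) (sub_le_self _ (pow_nonneg' h0 h1 _)) (hF1 _)
  · intro z hz
    have hz' : ∀ n : ℕ, 1 - (1 - T) ^ n ≤ z := fun n => hz ⟨⟨n⟩, rfl⟩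
    have hF2 : ∀ n : ℕ, rp T = (1 - (1 - T) ^ n) + (1 - T) ^ n * rp T := by
      intro n
      have hs : star (1 - (1 - T) ^ n) = 1 - (1 - T) ^ n := IsSelfAdjoint.of_nonneg (hF0 n)
      have := congrArg star (hF1 n)
      rw [star_mul, hs, hQ.2] at this
      calc rp T = (1 - (1 - T) ^ n) * rp T + (1 - T) ^ n * rp T := by noncomm_ring
        _ = _ := by rw [this]
    rw [ContinuousLinearMap.le_def, ContinuousLinearMap.isPositive_iff_complex]
    have hz0 : 0 ≤ z := by simpa using hz' 0
    have hsa : IsSelfAdjoint (z - rp T) := (IsSelfAdjoint.of_nonneg hz0).sub hQ.2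
    intro v
    have hpos : ∀ n : ℕ, 0 ≤ RCLike.re (inner ℂ ((z - (1 - (1 - T) ^ n)) v) v) := by
      intro n
      have := (ContinuousLinearMap.le_def _ _).1 (hz' n)
      exact this.re_inner_nonneg_left v
    have hlim : Tendsto (fun n : ℕ => RCLike.re (inner ℂ ((z - (1 - (1 - T) ^ n)) v) v)) atTop
        (𝓝 (RCLike.re (inner ℂ ((z - rp T) v) v))) := by
      have e : ∀ n : ℕ, (z - (1 - (1 - T) ^ n)) v
          = (z - rp T) v + ((1 - T) ^ n) (rp T v) := by
        intro n
        have := congrArg (fun f : H →L[ℂ] H => f v) (hF2 n)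
        simp only [add_apply, sub_apply, mul_apply_eq_comp] at this ⊢
        rw [eq_sub_of_add_eq' this.symm]; abel
      simp_rw [e]
      have hl := (pow_tendsto h0 h1 _ (rp_mem T v)).const_add ((z - rp T) v)
      rw [add_zero] at hl
      exact (RCLike.continuous_re.tendsto _).comp (hl.inner tendsto_const_nhds)
    refine ⟨?_, ge_of_tendsto' hlim hpos⟩
    exact hsa.isSymmetric.coe_re_inner_apply_self v

lemma geom_aux (S : H →L[ℂ] H) (n : ℕ) :
    (∑ k ∈ Finset.range n, (1 - S) ^ k) * S = 1 - (1 - S) ^ n := by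
  have := geom_sum_mul_neg (1 - S) n
  simpa using this

lemma inter_aux (x : H →L[ℂ] H) (k : ℕ) :
    (1 - x * star x) ^ k * x = x * (1 - star x * x) ^ k := by
  induction k with
  | zero => simp
  | succ k ih =>
    rw [pow_succ, mul_assoc, pow_succ', ← mul_assoc x]
    have : (1 - x * star x) * x = x * (1 - star x * x) := by noncomm_ring
    rw [this, ← mul_assoc, ih, mul_assoc, mul_assoc, ← pow_succ, ← pow_succ']

lemma tau_rp {M : VonNeumannAlgebra H} {τ : (H →L[ℂ] H) → ENNReal}
    (hτ : IsFNSTrace M τ) {x p : H →L[ℂ] H} (hx : x ∈ M) (hp : p ∈ M) (hpp : IsProjection p)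
    (hxp : x * p = x) (hn : ‖x‖ ≤ 1) : τ (rp (x * star x)) ≤ τ p := by
  have hxs : star x ∈ M := star_mem hx
  have hT : x * star x ∈ M := mul_mem hx hxs
  have hS : star x * x ∈ M := mul_mem hxs hx
  have hT0 : 0 ≤ x * star x := mul_star_self_nonneg x
  have hS0 : 0 ≤ star x * x := star_mul_self_nonneg x
  have hT1 : x * star x ≤ 1 := by
    refine (CStarAlgebra.norm_le_one_iff_of_nonneg _ hT0).1 ?_
    rw [CStarRing.norm_self_mul_star]; nlinarith [norm_nonneg x]
  have hS1 : star x * x ≤ 1 := by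
    refine (CStarAlgebra.norm_le_one_iff_of_nonneg _ hS0).1 ?_
    rw [CStarRing.norm_star_mul_self]; nlinarith [norm_nonneg x]
  have hone : (1 : H →L[ℂ] H) ∈ M := one_mem M
  have hFM : ∀ n : ℕ, 1 - (1 - x * star x) ^ n ∈ M := fun n =>
    sub_mem hone (pow_mem (sub_mem hone hT) n)
  have hmono : Monotone fun n : ℕ => 1 - (1 - x * star x) ^ n := by
    refine monotone_nat_of_le_succ fun n => ?_
    have : 1 - (1 - x * star x) ^ (n + 1)
          = (1 - (1 - x * star x) ^ n) + (1 - x * star x) ^ n * (x * star x) := by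
        rw [pow_succ, mul_sub]; noncomm_ring
    rw [this]
    exact le_add_of_nonneg_right (pow_mul_nonneg' hT0 hT1 n)
  have hF0 : ∀ n : ℕ, 0 ≤ 1 - (1 - x * star x) ^ n := fun n => by
    simpa using hmono (Nat.zero_le n)
  have hnorm : ∀ n : ℕ, ‖1 - (1 - x * star x) ^ n‖ ≤ 1 := fun n =>
    (CStarAlgebra.norm_le_one_iff_of_nonneg _ (hF0 n)).2
      (sub_le_self _ (pow_nonneg' hT0 hT1 n))
  have hnor := hτ.normal (ULift ℕ) (fun i => 1 - (1 - x * star x) ^ i.down) (rp (x * star x))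
    (fun i => hFM _) (fun i => hF0 _) (fun i j hij => hmono hij) ⟨1, fun i => hnorm _⟩
    (rp_mem_M M hT) (isLUB_rp hT0 hT1)
  rw [hnor]
  refine iSup_le fun i => ?_
  set n := i.down
  set S := star x * x with hSdef
  set h := ∑ k ∈ Finset.range n, (1 - S) ^ k with hh
  have hM : h ∈ M := sum_mem fun k _ => pow_mem (sub_mem hone hS) k
  have h0 : 0 ≤ h := Finset.sum_nonneg fun k _ => pow_nonneg' hS0 hS1 k
  set w := CFC.sqrt h with hw
  have hwM : w ∈ M := sqrt_mem_M M hM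
  have hw0 : 0 ≤ w := CFC.sqrt_nonneg h
  have hws : star w = w := IsSelfAdjoint.of_nonneg hw0
  have hww : w * w = h := CFC.sqrt_mul_sqrt_self h h0
  have hcS : Commute h S := by
    rw [hh]
    exact Commute.sum_left _ _ _ fun k _ => ((Commute.one_left S).sub_left (Commute.refl S)).pow_left k
  have hcw : Commute w S := by
    rw [hw, CFC.sqrt_eq_cfc]; exact hcS.cfc_nnreal _
  have e1 : 1 - (1 - x * star x) ^ n = (x * w) * star (x * w) := by
    rw [← geom_aux, star_mul, hws, mul_assoc x, ← mul_assoc w, hww, ← mul_assoc, ← mul_assoc,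
      hh, Finset.sum_mul, Finset.mul_sum]
    congr 1
    exact Finset.sum_congr rfl fun k _ => inter_aux x k
  have e2 : star (x * w) * (x * w) = 1 - (1 - S) ^ n := by
    rw [← geom_aux, star_mul, hws, ← hh, ← hww, mul_assoc, ← mul_assoc (star x), ← hSdef,
      ← hcw.eq, mul_assoc]
  have hG0 : 0 ≤ 1 - (1 - S) ^ n := by rw [← e2]; exact star_mul_self_nonneg _
  have hpS : S * p = S := by rw [hSdef, mul_assoc, hxp]
  have hpS' : p * S = S := by
    have hs : star S = S := IsSelfAdjoint.of_nonneg hS0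
    have := congrArg star hpS
    rwa [star_mul, hs, hpp.2] at this
  have hGp : p * (1 - (1 - S) ^ n) = 1 - (1 - S) ^ n := by
    rw [← geom_aux, ← hh, hcS.eq, ← mul_assoc, hpS']
  rw [e1, ← hτ.tracial _ (mul_mem hx hwM), e2]
  exact tau_mono hτ (sub_mem hone (pow_mem (sub_mem hone hS) n)) hp hG0
    (le_proj hpp hG0 (sub_le_self _ (pow_nonneg' hS0 hS1 n)) hGp)

lemma proj_norm {p : H →L[ℂ] H} (hp : IsProjection p) : ‖p‖ ≤ 1 :=
  (CStarAlgebra.norm_le_one_iff_of_nonneg _ (proj_nonneg hp)).2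
    (sub_nonneg.1 (proj_nonneg (proj_compl hp)))

lemma rp_mul_of_mul_star (x : H →L[ℂ] H) : rp (x * star x) * x = x := by
  have h := rp_mul_self (x * star x)
  have hQ := rp_proj (x * star x)
  have h1 : ((1 - rp (x * star x)) * x) * star ((1 - rp (x * star x)) * x) = 0 := by
    rw [star_mul, mul_assoc, ← mul_assoc x, ← mul_assoc, sub_mul, h]; simp
  have h2 := (CStarRing.mul_star_self_eq_zero_iff _).1 h1
  rw [sub_mul, one_mul, sub_eq_zero] at h2
  exact h2.symm

/-- One step: make `p` commute with `e`. -/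
lemma step {M : VonNeumannAlgebra H} {τ : (H →L[ℂ] H) → ENNReal}
    (hτ : IsFNSTrace M τ) {p e : H →L[ℂ] H} (hp : IsTauFiniteProjection M τ p)
    (he : e ∈ M) (hep : IsProjection e) :
    ∃ q, IsTauFiniteProjection M τ q ∧ q * p = p ∧ q * e = e * q ∧
      ∀ f, star f = f → f * e = e * f → p * f = f * p → q * f = f * q := by
  obtain ⟨hpM, hpp, hpt⟩ := hp
  have main : ∀ g : H →L[ℂ] H, g ∈ M → IsProjection g → ∃ Q, Q ∈ M ∧ IsProjection Q ∧ τ Q < ⊤ ∧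
      g * Q = Q ∧ Q * g = Q ∧ Q * (g * p) = g * p ∧
      ∀ f, star f = f → f * g = g * f → p * f = f * p → Q * f = f * Q := by
    intro g hg hgp
    set x := g * p with hx
    have hxM : x ∈ M := mul_mem hg hpM
    have hxs : star x = p * g := by rw [hx, star_mul, hpp.2, hgp.2]
    have hgQ : g * rp (x * star x) = rp (x * star x) := by
      have : g * rp (x * star x) = 1 * rp (x * star x) := by
        apply mul_rp_eq
        rw [one_mul, ← mul_assoc, hx, ← mul_assoc, hgp.1]
      rwa [one_mul] at this
    refine ⟨rp (x * star x), rp_mem_M M (mul_mem hxM (star_mem hxM)), rp_proj _, ?_, hgQ, ?_,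
      rp_mul_of_mul_star x, ?_⟩
    · refine (tau_rp hτ hxM hpM hpp (by rw [hx, mul_assoc, hpp.1]) ?_).trans_lt hpt
      rw [hx]
      refine (norm_mul_le _ _).trans ?_
      exact mul_le_one₀ (proj_norm hgp) (norm_nonneg _) (proj_norm hpp)
    · have := congrArg star hgQ
      rwa [star_mul, hgp.2, (rp_proj _).2] at this
    · intro f hf hfg hpf
      have c1 : Commute f g := hfg
      have c2 : Commute f p := hpf.symm
      have c3 : Commute f (x * star x) := by
        rw [hxs, hx]; exact (c1.mul_right c2).mul_right (c2.mul_right c1)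
      exact rp_comm c3 (by rw [hf]; exact c3)
  obtain ⟨Q, hQM, hQp, hQt, a1, a2, a3, a4⟩ := main e he hep
  obtain ⟨R, hRM, hRp, hRt, b1, b2, b3, b4⟩ := main (1 - e) (sub_mem (one_mem M) he)
    (proj_compl hep)
  rw [sub_mul, one_mul, sub_eq_self] at b1
  rw [mul_sub, mul_one, sub_eq_self] at b2
  have hQR : Q * R = 0 := by rw [← a2, mul_assoc, b1, mul_zero]
  have hRQ : R * Q = 0 := by rw [← a1, ← mul_assoc, b2, zero_mul]
  refine ⟨Q + R, ⟨add_mem hQM hRM, ⟨?_, ?_⟩, ?_⟩, ?_, ?_, ?_⟩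
  · simp [mul_add, add_mul, hQp.1, hRp.1, hQR, hRQ]
  · simp [hQp.2, hRp.2]
  · rw [hτ.additive Q R hQM hRM (proj_nonneg hQp) (proj_nonneg hRp)]
    exact ENNReal.add_lt_top.2 ⟨hQt, hRt⟩
  · have c1 : Q * p = e * p := by rw [← a3, ← mul_assoc, a2]
    have c2 : R * p = (1 - e) * p := by
      rw [← b3, ← mul_assoc, mul_sub, b2, mul_one, sub_zero]
    rw [add_mul, c1, c2]; noncomm_ring
  · rw [add_mul, mul_add, a1, a2, b1, b2]
  · intro f hf hfe hpf
    rw [add_mul, mul_add, a4 f hf hfe hpf, b4 f hf (by rw [mul_sub, sub_mul, hfe]; simp) hpf]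

lemma steps {M : VonNeumannAlgebra H} {τ : (H →L[ℂ] H) → ENNReal}
    (hτ : IsFNSTrace M τ) {p : H →L[ℂ] H} (hp : IsTauFiniteProjection M τ p)
    {L : Set (H →L[ℂ] H)} (hL : L.Finite) :
    (∀ e ∈ L, e ∈ M ∧ IsProjection e) → (∀ e ∈ L, ∀ f ∈ L, e * f = f * e) →
    ∃ q, IsTauFiniteProjection M τ q ∧ q * p = p ∧ ∀ e ∈ L, q * e = e * q := by
  induction L, hL using Set.Finite.induction_on with
  | empty => intro _ _; exact ⟨p, hp, hp.2.1.1, by simp⟩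
  | @insert e L _ _ ih =>
    intro h1 h2
    obtain ⟨q, hq, hqp, hqc⟩ := ih (fun f hf => h1 f (Set.mem_insert_of_mem _ hf))
      (fun f hf g hg => h2 f (Set.mem_insert_of_mem _ hf) g (Set.mem_insert_of_mem _ hg))
    obtain ⟨he, hep⟩ := h1 e (Set.mem_insert _ _)
    obtain ⟨r, hr, hrq, hre, hrc⟩ := step hτ hq he hep
    refine ⟨r, hr, ?_, ?_⟩
    · rw [← hqp, ← mul_assoc, hrq]
    · intro f hf
      rcases Set.mem_insert_iff.1 hf with rfl | hf'
      · exact hre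
      · exact hrc f (h1 f hf).2.2 (h2 f hf e (Set.mem_insert _ _)) (hqc f hf')

lemma jordan {b : H →L[ℂ] H} (hsb : IsSelfAdjoint b) :
    ∃ P N : H →L[ℂ] H, 0 ≤ P ∧ 0 ≤ N ∧ P - N = b ∧ N * P = 0 ∧
      ∀ u, Commute b u → u * P = P * u := by
  refine ⟨b⁺, b⁻, CFC.posPart_nonneg b, CFC.negPart_nonneg b, CFC.posPart_sub_negPart b hsb,
    CFC.negPart_mul_posPart b, fun u hu => ?_⟩
  rw [CFC.posPart_def]
  exact (hu.cfcₙ_real _).eq.symm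

lemma alg1 {P N e : H →L[ℂ] H} (c : ℝ) (hee : e * e = e) (h2 : e * P = P) (h2' : P * e = P)
    (h3 : N * e = 0) (h3' : e * N = 0) :
    (P - N + c • (1 : H →L[ℂ] H)) - c • e
      = P + (1 - e) * (P - N + c • (1 : H →L[ℂ] H)) * (1 - e) := by
  simp only [mul_sub, sub_mul, mul_add, add_mul, h2, h2', h3, h3', mul_one, one_mul,
    mul_smul_comm, smul_mul_assoc, hee, zero_mul, smul_sub, sub_self, smul_zero]
  abel

lemma alg2 {P N e : H →L[ℂ] H} (c : ℝ) (hee : e * e = e) (h2 : e * P = P) (h2' : P * e = P)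
    (h3 : N * e = 0) (h3' : e * N = 0) :
    c • (1 : H →L[ℂ] H) - ((P - N + c • (1 : H →L[ℂ] H)) - c • e)
      = e * ((2 * c) • 1 - (P - N + c • (1 : H →L[ℂ] H))) * e + N := by
  rw [two_mul, add_smul]
  simp only [mul_sub, sub_mul, mul_add, add_mul, h2, h2', h3, h3', mul_one,
    mul_smul_comm, smul_mul_assoc, hee, zero_mul, smul_sub, sub_self, smul_zero]
  abel

/-- One dyadic step of the spectral approximation. -/
lemma dyadic_step {B : Set (H →L[ℂ] H)} (hB : ∀ y ∈ B, star y ∈ B) {a : H →L[ℂ] H}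
    (ha : a ∈ Set.centralizer B) {c : ℝ} (h0 : 0 ≤ a) (h1 : a ≤ (2 * c) • 1) :
    ∃ e, e ∈ Set.centralizer B ∧ IsProjection e ∧ 0 ≤ a - c • e ∧ a - c • e ≤ c • 1 := by
  have hsa : IsSelfAdjoint a := IsSelfAdjoint.of_nonneg h0
  have hsb : IsSelfAdjoint (a - c • (1 : H →L[ℂ] H)) :=
    hsa.sub ((IsSelfAdjoint.all c).smul (IsSelfAdjoint.one _))
  obtain ⟨P, N, hp0, hn0, hbb, hnp, hPc⟩ := jordan hsb
  have hep : IsProjection (rp P) := rp_proj _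
  have h2 : rp P * P = P := rp_mul_self _
  have h3 : N * rp P = 0 := by
    have : N * rp P = 0 * rp P := mul_rp_eq (by rw [hnp, zero_mul])
    rwa [zero_mul] at this
  have hps : star P = P := IsSelfAdjoint.of_nonneg hp0
  have h2' : P * rp P = P := by
    have := congrArg star h2
    rwa [star_mul, hps, hep.2] at this
  have hns : star N = N := IsSelfAdjoint.of_nonneg hn0
  have h3' : rp P * N = 0 := by
    have := congrArg star h3
    rwa [star_mul, hns, hep.2, star_zero] at this
  have hab : P - N + c • (1 : H →L[ℂ] H) = a := by rw [hbb, sub_add_cancel]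
  refine ⟨rp P, ?_, hep, ?_, ?_⟩
  · intro y hy
    have key : ∀ u ∈ B, u * P = P * u := by
      intro u hu
      have hc' : Commute a u := (ha u hu).symm
      exact hPc u (hc'.sub_left ((Commute.one_left u).smul_left c))
    exact (rp_comm (key y hy) (key _ (hB y hy))).symm
  · have := alg1 c hep.1 h2 h2' h3 h3'
    rw [hab] at this
    rw [this]
    exact add_nonneg hp0 (IsSelfAdjoint.conjugate_nonneg h0 (proj_compl hep).2)
  · have := alg2 c hep.1 h2 h2' h3 h3'
    rw [hab] at this
    rw [← sub_nonneg, this]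
    exact add_nonneg (IsSelfAdjoint.conjugate_nonneg (sub_nonneg.2 h1) hep.2) hn0

lemma dyadic {B : Set (H →L[ℂ] H)} (hB : ∀ y ∈ B, star y ∈ B) (m : ℕ) :
    ∀ (a : H →L[ℂ] H), a ∈ Set.centralizer B → ∀ c : ℝ, 0 ≤ a → a ≤ (2 ^ m * c) • 1 →
    ∃ (L : Set (H →L[ℂ] H)) (s : H →L[ℂ] H), L.Finite ∧
      (∀ e ∈ L, e ∈ Set.centralizer B ∧ IsProjection e) ∧
      (∀ q, (∀ e ∈ L, q * e = e * q) → q * s = s * q) ∧ 0 ≤ a - s ∧ a - s ≤ c • 1 := by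
  induction m with
  | zero =>
    intro a _ c h0 h1
    exact ⟨∅, 0, Set.finite_empty, by simp, by simp, by simpa using h0, by simpa using h1⟩
  | succ m ih =>
    intro a ha c h0 h1
    obtain ⟨e, heB, hep, e0, e1⟩ := dyadic_step (c := 2 ^ m * c) hB ha h0
      (by rwa [← mul_assoc, ← pow_succ'])
    have ha' : a - (2 ^ m * c) • e ∈ Set.centralizer B := by
      intro y hy
      rw [mul_sub, sub_mul, mul_smul_comm, smul_mul_assoc, ha y hy, heB y hy]
    obtain ⟨L, s, hL, h2, h3, h4, h5⟩ := ih _ ha' c e0 e1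
    refine ⟨insert e L, (2 ^ m * c) • e + s, hL.insert e, ?_, ?_, ?_, ?_⟩
    · intro f hf
      rcases Set.mem_insert_iff.1 hf with rfl | hf'
      · exact ⟨heB, hep⟩
      · exact h2 f hf'
    · intro q hq
      rw [mul_add, add_mul, mul_smul_comm, smul_mul_assoc, hq e (Set.mem_insert _ _),
        h3 q fun f hf => hq f (Set.mem_insert_of_mem _ hf)]
    · rwa [← sub_sub]
    · rwa [← sub_sub]

lemma approx {B : Set (H →L[ℂ] H)} (hB : ∀ y ∈ B, star y ∈ B) {a : H →L[ℂ] H}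
    (ha : a ∈ Set.centralizer B) (hs : star a = a) {ε : ℝ} (hε : 0 < ε) :
    ∃ L : Set (H →L[ℂ] H), L.Finite ∧
      (∀ e ∈ L, e ∈ Set.centralizer B ∧ IsProjection e) ∧
      (∀ q, IsProjection q → (∀ e ∈ L, q * e = e * q) → ‖q * a - a * q‖ ≤ ε) := by
  obtain ⟨m, hm⟩ := pow_unbounded_of_one_lt (2 * ‖a‖ / (ε / 2)) (one_lt_two (α := ℝ))
  rw [div_lt_iff₀ (by positivity)] at hm
  have hsa : IsSelfAdjoint a := hs
  have hle : a ≤ ‖a‖ • (1 : H →L[ℂ] H) := by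
    have := IsSelfAdjoint.le_algebraMap_norm_self hsa
    rwa [Algebra.algebraMap_eq_smul_one] at this
  have hge : -(‖a‖ • (1 : H →L[ℂ] H)) ≤ a := by
    have := IsSelfAdjoint.neg_algebraMap_norm_le_self hsa
    rwa [Algebra.algebraMap_eq_smul_one] at this
  have ha' : a + ‖a‖ • (1 : H →L[ℂ] H) ∈ Set.centralizer B := by
    intro y hy
    rw [mul_add, add_mul, ha y hy]; simp
  have hnn : (0 : H →L[ℂ] H) ≤ 1 := by simpa using star_mul_self_nonneg (1 : H →L[ℂ] H)
  have hup : a + ‖a‖ • (1 : H →L[ℂ] H) ≤ (2 ^ m * (ε / 2)) • 1 := by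
    have e1 : a + ‖a‖ • (1 : H →L[ℂ] H) ≤ (2 * ‖a‖) • (1 : H →L[ℂ] H) := by
      rw [two_mul, add_smul]; exact add_le_add_left hle _
    exact e1.trans (smul_le_smul_of_nonneg_right hm.le hnn)
  obtain ⟨L, s, hL, h2, h3, h4, h5⟩ := dyadic hB m _ ha' (ε / 2)
    (by have := sub_nonneg.2 hge; rwa [sub_neg_eq_add] at this) hup
  refine ⟨L, hL, h2, fun q hq hqL => ?_⟩
  have hqs := h3 q hqL
  set d := a + ‖a‖ • (1 : H →L[ℂ] H) - s with hd
  have hdn : ‖d‖ ≤ ε / 2 := by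
    refine (CStarAlgebra.norm_le_iff_le_algebraMap _ (by positivity) h4).2 ?_
    rwa [Algebra.algebraMap_eq_smul_one]
  have e1 : q * a - a * q = q * d - d * q := by
    rw [hd, mul_sub, sub_mul, mul_add, add_mul, hqs]; simp
  rw [e1]
  have hqn := proj_norm hq
  calc ‖q * d - d * q‖ ≤ ‖q‖ * ‖d‖ + ‖d‖ * ‖q‖ :=
        (norm_sub_le _ _).trans (add_le_add (norm_mul_le _ _) (norm_mul_le _ _))
    _ ≤ ε := by nlinarith [norm_nonneg d, norm_nonneg q]

end Aux

end VNA

open VNA in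
/-- The quasicentral modulus of `α` relative to the uniform norm vanishes:
for every `a ∈ F₁⁺(M)` and `ε > 0` there is `r ∈ F₁⁺(M)` with `r ≥ a` and
`‖[r, α(j)]‖ ≤ ε` for all `j`. -/
theorem statement_5 {H : Type*} [NormedAddCommGroup H] [InnerProductSpace ℂ H]
    [CompleteSpace H] (M : VonNeumannAlgebra H) (τ : (H →L[ℂ] H) → ENNReal)
    (hτ : IsFNSTrace M τ) (n : ℕ) (hn : 0 < n) (α : Fin n → (H →L[ℂ] H))
    (hα : IsCommutingSelfAdjointTuple M α) :
    ∀ a ∈ F1plus M τ, ∀ ε : ℝ, 0 < ε →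
      ∃ r ∈ F1plus M τ, a ≤ r ∧ ∀ j, ‖r * α j - α j * r‖ ≤ ε := by
  intro a ha ε hε
  obtain ⟨haM, ha0, ha1, p, hp, hpa⟩ := ha
  obtain ⟨hαM, hαs, hαc⟩ := hα
  set B : Set (H →L[ℂ] H) := Set.centralizer (Set.range α) with hBdef
  have hB : ∀ y ∈ B, star y ∈ B := by
    rintro y hy _ ⟨j, rfl⟩
    have := congrArg star (hy (α j) ⟨j, rfl⟩)
    rw [star_mul, star_mul, hαs] at this
    exact this.symm
  have hαB : ∀ j, α j ∈ Set.centralizer B := fun j y hy => (hy (α j) ⟨j, rfl⟩).symm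
  have hαB' : ∀ j, α j ∈ B := by
    rintro j _ ⟨i, rfl⟩
    exact hαc i j
  have hBM : ∀ e ∈ Set.centralizer B, e ∈ M := fun e he =>
    mem_of_comm M fun y hy => he y (by rintro _ ⟨j, rfl⟩; exact hy _ (hαM j))
  have hcomm : ∀ e ∈ Set.centralizer B, e ∈ B := by
    rintro e he _ ⟨j, rfl⟩
    exact he _ (hαB' j)
  choose L hLf hL1 hL2 using fun j => approx hB (hαB j) (hαs j) hε
  obtain ⟨q, hq, hqp, hqc⟩ := steps hτ hp (Set.finite_iUnion hLf)
    (fun e he => by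
      obtain ⟨j, hj⟩ := Set.mem_iUnion.1 he
      exact ⟨hBM e (hL1 j e hj).1, (hL1 j e hj).2⟩)
    (fun e he f hf => by
      obtain ⟨j, hj⟩ := Set.mem_iUnion.1 he
      obtain ⟨i, hi⟩ := Set.mem_iUnion.1 hf
      exact (hL1 i f hi).1 e (hcomm e (hL1 j e hj).1))
  have hqa : q * a = a := by rw [← hpa, ← mul_assoc, hqp]
  refine ⟨q, ⟨hq.1, proj_nonneg hq.2.1, sub_nonneg.1 (proj_nonneg (proj_compl hq.2.1)),
    q, hq, hq.2.1.1⟩, le_proj hq.2.1 ha0 ha1 hqa, fun j => ?_⟩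
  exact hL2 j q hq.2.1 fun e he => hqc e (Set.mem_iUnion.2 ⟨j, he⟩)
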